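/- arXiv:1707.09925 — 2 statements merged into one kernel-verified Lean document; each statement's English description precedes it below -/
import Mathlib

section
/- If an element a of PGL₂(F₂((y))) has finite order, then its order is 1, 2 or 3. -/
open Polynomial in
/-- Trace polynomials: for `B ^ 2 = B + u`, `B ^ (n+1) = p (n+1) (u) B + u p n (u)`. -/
noncomputable def pglP : ℕ → (ZMod 2)[X]
  | 0 => 0
  | 1 => 1
  | (n + 2) => pglP (n + 1) + X * pglP n

theorem pglP_coeff (n : ℕ) : (pglP (n + 1)).coeff 0 = 1 := by
  induction n with
  | zero => simp [pglP]
  | succ k ih => rw [pglP]; simp [ih]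

theorem pgl_char (x : LaurentSeries (ZMod 2)) : x + x = 0 := by
  ext n
  simpa using CharTwo.add_self_eq_zero (x.coeff n)

theorem pgl_fin (F : Type*) {E : Type*} [Field F] [Finite F] [Field E] [Algebra F E] (u : E)
    (h : IsAlgebraic F u) : Finite (IntermediateField.adjoin F {u}) := by
  have := IntermediateField.adjoin.finiteDimensional h.isIntegral
  exact Module.finite_of_finite F

theorem pgl_order {u : LaurentSeries (ZMod 2)} (hu : u ≠ 0) (h : IsAlgebraic (ZMod 2) u) :
    u.order = 0 := by
  have : Finite (IntermediateField.adjoin (ZMod 2) {u}) :=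
    pgl_fin (ZMod 2) u h
  let v : IntermediateField.adjoin (ZMod 2) {u} :=
    ⟨u, IntermediateField.mem_adjoin_simple_self _ u⟩
  have hv : v ≠ 0 := fun e => hu (congrArg Subtype.val e)
  obtain ⟨k, hk, hk1⟩ := isOfFinOrder_iff_pow_eq_one.1 (isOfFinOrder_of_finite (Units.mk0 v hv))
  have h2 : u ^ k = 1 := by
    have h3 := congrArg (fun z : (IntermediateField.adjoin (ZMod 2) {u})ˣ =>
      ((z : IntermediateField.adjoin (ZMod 2) {u}) : LaurentSeries (ZMod 2))) hk1
    simpa [v] using h3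
  have h4 := HahnSeries.order_pow u k
  rw [h2, HahnSeries.order_one] at h4
  have : (k : ℤ) * u.order = 0 := by simpa using h4.symm
  rcases mul_eq_zero.1 this with h | h
  · omega
  · exact h

theorem pgl_one {u : LaurentSeries (ZMod 2)} (hu : u ≠ 0) (h : IsAlgebraic (ZMod 2) u) :
    u = 1 := by
  by_contra hne
  have h0 : u - 1 ≠ 0 := sub_ne_zero.2 hne
  have o1 := pgl_order hu h
  have o2 := pgl_order h0 (h.sub isAlgebraic_one)
  have c1 : u.coeff 0 ≠ 0 := by
    rw [← o1]; exact fun e => hu (HahnSeries.coeff_order_eq_zero.1 e)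
  have c2 : (u - 1).coeff 0 ≠ 0 := by
    rw [← o2]; exact fun e => h0 (HahnSeries.coeff_order_eq_zero.1 e)
  rw [HahnSeries.coeff_sub, HahnSeries.coeff_one, if_pos rfl] at c2
  revert c1 c2
  generalize u.coeff 0 = z
  revert z
  decide

theorem pgl_cayley {K : Type*} [Field K] (A : Matrix (Fin 2) (Fin 2) K) :
    A * A = A.trace • A - A.det • (1 : Matrix (Fin 2) (Fin 2) K) := by
  ext i j
  fin_cases i <;> fin_cases j <;>
    simp [Matrix.mul_apply, Fin.sum_univ_two, Matrix.trace, Matrix.det_fin_two] <;> ring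

theorem pgl_pow {K : Type*} [Field K] [Algebra (ZMod 2) K] (B : Matrix (Fin 2) (Fin 2) K)
    (u : K) (hB : B * B = B + u • (1 : Matrix (Fin 2) (Fin 2) K)) (n : ℕ) :
    B ^ (n + 1) = Polynomial.aeval u (pglP (n + 1)) • B
      + (u * Polynomial.aeval u (pglP n)) • (1 : Matrix (Fin 2) (Fin 2) K) := by
  induction n with
  | zero => simp [pglP]
  | succ k ih =>
    rw [pow_succ, ih, add_mul, smul_mul_assoc, hB, smul_mul_assoc, one_mul, pglP]
    simp only [map_add, map_mul, Polynomial.aeval_X]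
    module

theorem pgl_mem (g : GL (Fin 2) (LaurentSeries (ZMod 2))) :
    g ∈ Subgroup.center (GL (Fin 2) (LaurentSeries (ZMod 2))) ↔
      ∃ c : LaurentSeries (ZMod 2), g.val = c • (1 : Matrix (Fin 2) (Fin 2) _) := by
  rw [Matrix.GeneralLinearGroup.mem_center_iff_val_mem_range_scalar]
  simp only [Set.mem_range, Matrix.smul_one_eq_diagonal, Matrix.scalar_apply, eq_comm]

theorem pgl_main {K : Type*} [Field K] [Algebra (ZMod 2) K] (h2 : ∀ x : K, x + x = 0)
    (hone : ∀ u : K, u ≠ 0 → IsAlgebraic (ZMod 2) u → u = 1)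
    (A : Matrix (Fin 2) (Fin 2) K) (hd : A.det ≠ 0)
    (n : ℕ) (c : K) (h : A ^ (n + 1) = c • (1 : Matrix (Fin 2) (Fin 2) K)) :
    (∃ c : K, A ^ 2 = c • (1 : Matrix (Fin 2) (Fin 2) K)) ∨
      (∃ c : K, A ^ 3 = c • (1 : Matrix (Fin 2) (Fin 2) K)) := by
  have hc := pgl_cayley A
  by_cases ht : A.trace = 0
  · left
    refine ⟨-A.det, ?_⟩
    rw [pow_two, hc, ht]; module
  right
  have hneg : ∀ x : K, -x = x := fun x => neg_eq_of_add_eq_zero_left (h2 x)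
  obtain ⟨B, hBdef⟩ : ∃ B, B = A.trace⁻¹ • A := ⟨_, rfl⟩
  have hA : A = A.trace • B := by rw [hBdef, smul_smul, mul_inv_cancel₀ ht, one_smul]
  have htr : B.trace = 1 := by rw [hBdef, Matrix.trace_smul, smul_eq_mul, inv_mul_cancel₀ ht]
  have hdet : B.det ≠ 0 := by
    intro h0
    apply hd
    rw [hA, Matrix.det_smul, h0, mul_zero]
  have hB : B * B = B + B.det • (1 : Matrix (Fin 2) (Fin 2) K) := by
    rw [pgl_cayley B, htr, one_smul, sub_eq_add_neg, ← neg_smul, hneg]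
  have hBn : B ^ (n + 1) = (A.trace⁻¹ ^ (n + 1) * c) • (1 : Matrix (Fin 2) (Fin 2) K) := by
    rw [hBdef, smul_pow, h, smul_smul]
  have htr1 : ∀ x : K, (x • (1 : Matrix (Fin 2) (Fin 2) K)).trace = 0 := by
    intro x
    rw [Matrix.trace_fin_two]
    simpa using h2 x
  have hz : Polynomial.aeval B.det (pglP (n + 1)) = 0 := by
    have e := pgl_pow B B.det hB n
    rw [hBn] at e
    have e2 := congrArg Matrix.trace e
    rw [Matrix.trace_add, htr1, htr1, Matrix.trace_smul, htr, add_zero, smul_eq_mul,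
      mul_one] at e2
    exact e2.symm
  have hu : B.det = 1 := by
    apply hone _ hdet
    refine ⟨pglP (n + 1), ?_, hz⟩
    intro h0
    have := pglP_coeff n
    rw [h0] at this
    simp at this
  rw [hu, one_smul] at hB
  have hBB : B + B = 0 := by
    ext i j
    simp [h2]
  have hB3 : B ^ 3 = 1 := by
    rw [pow_succ, pow_two, hB, add_mul, hB, one_mul, add_right_comm, hBB, zero_add]
  refine ⟨A.trace ^ 3, ?_⟩
  rw [← hB3, ← smul_pow, ← hA]

theorem PGL2_LaurentSeries_ZMod2_finite_order_le_three
    (a : GL (Fin 2) (LaurentSeries (ZMod 2)) ⧸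
        Subgroup.center (GL (Fin 2) (LaurentSeries (ZMod 2))))
    (ha : IsOfFinOrder a) :
    orderOf a = 1 ∨ orderOf a = 2 ∨ orderOf a = 3 := by
  obtain ⟨g, rfl⟩ := QuotientGroup.mk_surjective a
  obtain ⟨n, hn, h1⟩ := isOfFinOrder_iff_pow_eq_one.1 ha
  obtain ⟨n, rfl⟩ : ∃ m, n = m + 1 := ⟨n - 1, by omega⟩
  rw [← QuotientGroup.mk_pow, QuotientGroup.eq_one_iff, pgl_mem] at h1
  obtain ⟨c, hc⟩ := h1
  have hd : g.val.det ≠ 0 := (Matrix.isUnit_iff_isUnit_det _ |>.1 g.isUnit).ne_zero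
  have key : ∀ k, (∃ c : LaurentSeries (ZMod 2), g.val ^ k = c • (1 : Matrix (Fin 2) (Fin 2) _)) →
      orderOf (g : GL (Fin 2) (LaurentSeries (ZMod 2)) ⧸
        Subgroup.center (GL (Fin 2) (LaurentSeries (ZMod 2)))) ∣ k := by
    intro k hk
    apply orderOf_dvd_of_pow_eq_one
    rw [← QuotientGroup.mk_pow, QuotientGroup.eq_one_iff, pgl_mem]
    simpa using hk
  rcases pgl_main pgl_char (fun _ => pgl_one) g.val hd n c (by simpa using hc) with h | h
  · rcases (Nat.dvd_prime Nat.prime_two).1 (key 2 h) with h | h <;> simp [h]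
  · rcases (Nat.dvd_prime Nat.prime_three).1 (key 3 h) with h | h <;> simp [h]
end

section
/- Let A = {b, b', c} be a three-element set and τ the involution of A swapping b and b' and fixing c, and let I = {0, 1}. Define permutations σ₁, σ₂, σ₃ of A × I as follows, where p denotes the 3-cycle (b c b') (so p(b) = c, p(c) = b', p(b') = b) and p⁻¹ = (b' c b): σ₁(x, 0) = (p⁻¹(x), 1) and σ₁(x, 1) = (p(x), 0); σ₂(x, 0) = (p(x), 1) and σ₂(x, 1) = (p⁻¹(x), 0); σ₃(x, i) = (τ(x), 1−i). Then the subgroup of Sym(A × I) generated by σ₁, σ₂, σ₃ equals the subgroup P = {ρ ∈ Sym(A × I) : there exist σ ∈ Sym(A) and ε ∈ Sym(I) such that for all (x, i), ρ(x, i) = (σ(x), ε(i)) if ε(i) = 0 and ρ(x, i) = ((τ∘σ∘τ)(x), ε(i)) if ε(i) = 1}; in particular this subgroup has order 12 and is isomorphic to Sym(A) × ℤ/2ℤ. -/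
/-!
STATEMENT 16: Let `A = {b, b', c}` be a three-element set, `τ` the involution of `A`
swapping `b` and `b'` and fixing `c`, and `I = {0, 1}` (formalized as `Fin 2`).
With `p` the 3-cycle `(b c b')`, define permutations `σ₁, σ₂, σ₃` of `A × I` by
`σ₁(x,0) = (p⁻¹ x, 1)`, `σ₁(x,1) = (p x, 0)`; `σ₂(x,0) = (p x, 1)`, `σ₂(x,1) = (p⁻¹ x, 0)`;
`σ₃(x,i) = (τ x, 1-i)`.  Then the subgroup generated by `σ₁, σ₂, σ₃` equals (as a set)
the subgroup `P = {ρ | ∃ σ ∈ Sym(A), ε ∈ Sym(I), ρ(x,i) = (σ x, ε i)` if `ε i = 0` and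
`ρ(x,i) = ((τστ) x, ε i)` if `ε i = 1}`; in particular it has order 12 and is isomorphic
to `Sym(A) × ℤ/2ℤ`.
-/

/-- The twist of `A × Fin 2` acting by `t` on the second layer. -/
def twistPerm {A : Type*} (t : Equiv.Perm A) (ht : ∀ x, t (t x) = x) :
    Equiv.Perm (A × Fin 2) where
  toFun q := if q.2 = 0 then q else (t q.1, q.2)
  invFun q := if q.2 = 0 then q else (t q.1, q.2)
  left_inv q := by by_cases h : q.2 = 0 <;> simp [h, ht]
  right_inv q := by by_cases h : q.2 = 0 <;> simp [h, ht]

/-- Conjugate by the twist of the product action. -/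
def twistHom {A : Type*} (t : Equiv.Perm A) (ht : ∀ x, t (t x) = x) :
    Equiv.Perm A × Equiv.Perm (Fin 2) →* Equiv.Perm (A × Fin 2) where
  toFun q := twistPerm t ht * Equiv.prodCongr q.1 q.2 * (twistPerm t ht)⁻¹
  map_one' := by
    ext x <;> simp
  map_mul' q r := by
    ext x <;> simp [← Prod.map_comp_map]

theorem twistHom_apply {A : Type*} (t : Equiv.Perm A) (ht : ∀ x, t (t x) = x)
    (σ : Equiv.Perm A) (ε : Equiv.Perm (Fin 2)) (x : A) (i : Fin 2) :
    twistHom t ht (σ, ε) (x, i) =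
      ((if ε i = 0 then (σ (if i = 0 then x else t x))
        else t (σ (if i = 0 then x else t x))), ε i) := by
  have h : (twistPerm t ht)⁻¹ (x, i) = if i = 0 then (x, i) else (t x, i) := rfl
  change twistPerm t ht (Equiv.prodCongr σ ε ((twistPerm t ht)⁻¹ (x, i))) = _
  rw [h]
  by_cases hi : i = 0 <;> by_cases he : ε i = 0 <;> simp [twistPerm, hi, he] <;> simp_all

theorem twistHom_injective {A : Type*} [Nonempty A] (t : Equiv.Perm A) (ht : ∀ x, t (t x) = x) :
    Function.Injective (twistHom t ht) := by
  rintro ⟨σ, ε⟩ ⟨σ', ε'⟩ h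
  have h' : ∀ x i, twistHom t ht (σ, ε) (x, i) = twistHom t ht (σ', ε') (x, i) := by simp [h]
  simp only [twistHom_apply, Prod.mk.injEq] at h'
  have he : ε = ε' := Equiv.ext fun i => (h' (Classical.arbitrary A) i).2
  subst he
  have hs : σ = σ' := Equiv.ext fun x => by
    have := (h' x 0).1
    by_cases h0 : ε 0 = 0 <;> simpa [h0] using this
  rw [hs]

theorem perm_fin_two (ε : Equiv.Perm (Fin 2)) : ε = 1 ∨ ε = Equiv.swap 0 1 := by
  revert ε; decide

theorem local_permutation_group_eq
    (A : Type*) [DecidableEq A] (b b' c : A)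
    (hbb' : b ≠ b') (hbc : b ≠ c) (hb'c : b' ≠ c)
    (hA : ∀ x : A, x = b ∨ x = b' ∨ x = c)
    (p : Equiv.Perm A) (hpb : p b = c) (hpc : p c = b') (hpb' : p b' = b)
    (σ₁ σ₂ σ₃ : Equiv.Perm (A × Fin 2))
    (hσ₁ : ∀ x : A, σ₁ (x, 0) = (p⁻¹ x, 1) ∧ σ₁ (x, 1) = (p x, 0))
    (hσ₂ : ∀ x : A, σ₂ (x, 0) = (p x, 1) ∧ σ₂ (x, 1) = (p⁻¹ x, 0))
    (hσ₃ : ∀ (x : A) (i : Fin 2), σ₃ (x, i) = (Equiv.swap b b' x, 1 - i)) :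
    ((Subgroup.closure {σ₁, σ₂, σ₃} : Subgroup (Equiv.Perm (A × Fin 2))) : Set _) =
      {ρ : Equiv.Perm (A × Fin 2) |
          ∃ (σ : Equiv.Perm A) (ε : Equiv.Perm (Fin 2)), ∀ (x : A) (i : Fin 2),
            (ε i = 0 → ρ (x, i) = (σ x, ε i)) ∧
            (ε i = 1 → ρ (x, i) = ((Equiv.swap b b' * σ * Equiv.swap b b') x, ε i))} ∧
    Nat.card (Subgroup.closure {σ₁, σ₂, σ₃} : Subgroup (Equiv.Perm (A × Fin 2))) = 12 ∧
    Nonempty ((Subgroup.closure {σ₁, σ₂, σ₃} : Subgroup (Equiv.Perm (A × Fin 2))) ≃*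
      Equiv.Perm A × Multiplicative (ZMod 2)) := by
  have ht : ∀ x, Equiv.swap b b' (Equiv.swap b b' x) = x := fun x => Equiv.swap_apply_self b b' x
  haveI : Nonempty A := ⟨b⟩
  letI : Fintype A := ⟨{b, b', c}, fun x => by simpa using hA x⟩
  have hcard : Fintype.card A = 3 := by
    change Finset.card {b, b', c} = 3
    rw [Finset.card_eq_three]; exact ⟨b, b', c, hbb', hbc, hb'c, rfl⟩
  have hib : p⁻¹ b = b' := by rw [Equiv.Perm.inv_eq_iff_eq]; exact hpb'.symm
  have hib' : p⁻¹ b' = c := by rw [Equiv.Perm.inv_eq_iff_eq]; exact hpc.symm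
  have hic : p⁻¹ c = b := by rw [Equiv.Perm.inv_eq_iff_eq]; exact hpb.symm
  have tb : Equiv.swap b b' b = b' := Equiv.swap_apply_left _ _
  have tb' : Equiv.swap b b' b' = b := Equiv.swap_apply_right _ _
  have tc : Equiv.swap b b' c = c := Equiv.swap_apply_of_ne_of_ne hbc.symm hb'c.symm
  have hs : p * Equiv.swap b b' = Equiv.swap b' c := by
    ext x
    rcases hA x with rfl | rfl | rfl
    · simp [hpb', Equiv.swap_apply_of_ne_of_ne hbb' hbc]
    · simp [hpb]
    · simp [tc, hpc]
  have hs' : p⁻¹ * Equiv.swap b b' = Equiv.swap b c := by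
    ext x
    rcases hA x with rfl | rfl | rfl
    · rw [Equiv.Perm.mul_apply, tb, hib', Equiv.swap_apply_left]
    · rw [Equiv.Perm.mul_apply, tb', hib, Equiv.swap_apply_of_ne_of_ne hbb'.symm hb'c]
    · rw [Equiv.Perm.mul_apply, tc, hic, Equiv.swap_apply_right]
  set τ := Equiv.swap b b' with hτ
  have h1 : twistHom τ ht (p * τ, Equiv.swap 0 1) = σ₁ := by
    refine Equiv.ext fun ⟨x, i⟩ => ?_
    rw [twistHom_apply]
    fin_cases i
    · rcases hA x with rfl | rfl | rfl <;>
        simp [hσ₁, tb, tb', tc, hpb, hpb', hpc, hib, hib', hic]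
    · simp [hσ₁, ht]
  have h2 : twistHom τ ht (p⁻¹ * τ, Equiv.swap 0 1) = σ₂ := by
    refine Equiv.ext fun ⟨x, i⟩ => ?_
    rw [twistHom_apply]
    fin_cases i
    · rcases hA x with rfl | rfl | rfl <;>
        simp [hσ₂, tb, tb', tc, hpb, hpb', hpc, hib, hib', hic, -Equiv.Perm.coe_inv]
    · simp [hσ₂, ht]
  have h3 : twistHom τ ht (1, Equiv.swap 0 1) = σ₃ := by
    refine Equiv.ext fun ⟨x, i⟩ => ?_
    rw [twistHom_apply]
    fin_cases i <;> simp [hσ₃]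
  have hcl : Subgroup.closure {σ₁, σ₂, σ₃} = (twistHom τ ht).range := by
    apply le_antisymm
    · rw [Subgroup.closure_le]
      rintro x (rfl | rfl | rfl)
      exacts [⟨_, h1⟩, ⟨_, h2⟩, ⟨_, h3⟩]
    · set K := (Subgroup.closure {σ₁, σ₂, σ₃}).comap (twistHom τ ht) with hK
      have k1 : (p * τ, Equiv.swap 0 1) ∈ K := by
        rw [hK, Subgroup.mem_comap, h1]; exact Subgroup.subset_closure (by simp)
      have k2 : (p⁻¹ * τ, Equiv.swap 0 1) ∈ K := by
        rw [hK, Subgroup.mem_comap, h2]; exact Subgroup.subset_closure (by simp)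
      have k3 : ((1 : Equiv.Perm A), Equiv.swap (0 : Fin 2) 1) ∈ K := by
        rw [hK, Subgroup.mem_comap, h3]; exact Subgroup.subset_closure (by simp)
      set L := K.comap (MonoidHom.inl (Equiv.Perm A) (Equiv.Perm (Fin 2))) with hL
      have l1 : Equiv.swap b' c ∈ L := by
        have := K.mul_mem k1 k3
        rw [hs] at this
        simpa [hL] using this
      have l2 : Equiv.swap b c ∈ L := by
        have := K.mul_mem k2 k3
        rw [hs'] at this
        simpa [hL] using this
      have l3 : Equiv.swap b b' ∈ L := by
        have := L.mul_mem (L.mul_mem l1 l2) l1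
        rw [Equiv.swap_comm b' c, Equiv.swap_mul_swap_mul_swap hbc hbb'] at this
        rw [Equiv.swap_comm]
        exact this
      have lt : L = ⊤ := by
        rw [eq_top_iff, ← Equiv.Perm.closure_isSwap, Subgroup.closure_le]
        rintro _ ⟨x, y, -, rfl⟩
        have l1' := l1
        have l2' := l2
        have l3' := l3
        rw [Equiv.swap_comm] at l1' l2' l3'
        rcases hA x with rfl | rfl | rfl <;> rcases hA y with rfl | rfl | rfl <;>
          first
          | assumption
          | (rw [Equiv.swap_self]; exact L.one_mem)
      rintro _ ⟨⟨σ, ε⟩, rfl⟩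
      change (σ, ε) ∈ K
      have hσ : (σ, (1 : Equiv.Perm (Fin 2))) ∈ K := by
        have : σ ∈ L := by rw [lt]; trivial
        exact this
      rcases perm_fin_two ε with rfl | rfl
      · exact hσ
      · simpa using K.mul_mem hσ k3
  let e0 := MonoidHom.ofInjective (twistHom_injective τ ht)
  have e2 : Equiv.Perm (Fin 2) ≃* Multiplicative (ZMod 2) :=
    mulEquivOfPrimeCardEq (p := 2) (by simp [Nat.card_eq_fintype_card, Fintype.card_perm])
      (by simp)
  rw [hcl]
  refine ⟨?_, ?_, ⟨e0.symm.trans (MulEquiv.prodCongr (MulEquiv.refl _) e2)⟩⟩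
  · ext ρ
    constructor
    · rintro ⟨⟨σ, ε⟩, rfl⟩
      rcases perm_fin_two ε with rfl | rfl
      · refine ⟨σ, 1, fun x i => ?_⟩
        rw [twistHom_apply]
        fin_cases i <;> simp
      · refine ⟨σ * τ, Equiv.swap 0 1, fun x i => ?_⟩
        rw [twistHom_apply]
        fin_cases i <;> simp [ht]
    · rintro ⟨σ, ε, h⟩
      rcases perm_fin_two ε with rfl | rfl
      · refine ⟨(σ, 1), Equiv.ext fun ⟨x, i⟩ => ?_⟩
        rw [twistHom_apply]
        have := h x i
        fin_cases i <;> simp_all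
      · refine ⟨(σ * τ, Equiv.swap 0 1), Equiv.ext fun ⟨x, i⟩ => ?_⟩
        rw [twistHom_apply]
        have := h x i
        fin_cases i <;> simp_all
  · rw [← Nat.card_congr e0.toEquiv, Nat.card_prod]
    simp [Nat.card_eq_fintype_card, Fintype.card_perm, hcard, Nat.factorial]
end
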